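/- arXiv:0910.4715 — 2 statements merged into one kernel-verified Lean document; each statement's English description precedes it below -/
import Mathlib

section
/- Let m, n be natural numbers with 0 ≤ m ≤ n, and let x > 1 be real. Then d^m/dx^m [P_n(x)·log(x−1)] = P_n^{(m)}(x)·log(x−1) + (ψ(n+1) − ψ(n−m+1))·P_n^{(m)}(x) − (−1)^{n+m}·2^{−m} Σ_{k=0}^{n−m} (−1)^k·((k+n+m)!·ψ(k+n+m+1))/(k!·(k+m)!·(n−m−k)!) · ((x+1)/2)^k + (−1)^n·((n+m)!/(n−m)!)·(x−1)^{−m} Σ_{k=0}^{n} (−1)^k·((k+n)!·ψ(k+n+1))/(k!·(k+m)!·(n−k)!) · ((x+1)/2)^k. -/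
open Finset Real

/-- The Legendre polynomial `P_n`, via its explicit expansion
`P_n(x) = ∑_{k=0}^{n} ((n+k)!/((k!)² (n−k)!)) ((x−1)/2)^k`. -/
noncomputable def legendreP (n : ℕ) (x : ℝ) : ℝ :=
  ∑ k ∈ Finset.range (n + 1),
    (((n + k).factorial : ℝ) / (((k.factorial : ℝ)) ^ 2 * ((n - k).factorial : ℝ))) *
      ((x - 1) / 2) ^ k

/-- The harmonic number `H_i = ∑_{r=1}^{i} 1/r`. -/
noncomputable def harm (i : ℕ) : ℝ := ∑ r ∈ Finset.range i, (1 : ℝ) / (r + 1)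

/-- The digamma function at a positive integer `j`: `ψ(j) = H_{j−1} − γ`. -/
noncomputable def psi (j : ℕ) : ℝ := harm (j - 1) - Real.eulerMascheroniConstant


lemma psi_succ' (j : ℕ) : psi (j + 1 + 1) = psi (j + 1) + 1 / ((j : ℝ) + 1) := by
  simp [psi, harm, Finset.sum_range_succ]; ring

lemma harm_succ' (j : ℕ) : harm (j + 1) = harm j + 1 / ((j : ℝ) + 1) := by
  simp [harm, Finset.sum_range_succ]

/-- alternating sum -/
noncomputable def altT (L c d : ℕ) : ℝ :=
  ∑ i ∈ Finset.range (L + 1), (L.choose i : ℝ) *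
    ((-1 : ℝ) ^ i * (((i + c + d).factorial : ℝ) / ((i + c).factorial : ℝ) * psi (i + c + d + 1)))

lemma altT_succ (L c d : ℕ) : altT (L + 1) c d = altT L c d - altT L (c + 1) d := by
  unfold altT
  have h := Finset.sum_choose_succ_mul (R := ℝ) (fun i _ => ((-1 : ℝ) ^ i * (((i + c + d).factorial : ℝ) / ((i + c).factorial : ℝ) * psi (i + c + d + 1)))) L
  rw [h, sub_eq_add_neg, ← Finset.sum_neg_distrib]
  congr 1
  apply Finset.sum_congr rfl
  intro i _
  rw [show i + 1 + c = i + (c + 1) by ring]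
  ring

lemma altT_one (L : ℕ) : ∀ c e : ℕ, altT L c (L + e) =
    (-1 : ℝ) ^ L * ((c + L + e).factorial : ℝ) / ((c + L).factorial : ℝ) *
      ((L + e).factorial : ℝ) / (e.factorial : ℝ) *
      (psi (c + L + e + 1) + harm (L + e) - harm e) := by
  induction L with
  | zero => 
    intro c e
    have h2 : (e.factorial : ℝ) ≠ 0 := by exact_mod_cast Nat.factorial_ne_zero _
    simp [altT]
    left
    rw [mul_div_assoc, div_self h2, mul_one]
  | succ L ih =>
    intro c e
    rw [altT_succ, show L + 1 + e = L + (e + 1) by ring, ih, ih]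
    rw [show c + 1 + L + (e + 1) = (c + L + e + 1) + 1 by ring,
      show c + L + (e + 1) = c + L + e + 1 by ring,
      show c + 1 + L = c + L + 1 by ring, show c + (L + 1) + e = c + L + e + 1 by ring,
      show c + (L + 1) = c + L + 1 by ring, psi_succ' (c + L + e + 1), harm_succ' e,
      Nat.factorial_succ (c + L + e + 1), Nat.factorial_succ (c + L), Nat.factorial_succ e]
    have h1 : ((c + L).factorial : ℝ) ≠ 0 := by exact_mod_cast Nat.factorial_ne_zero _
    have h2 : (e.factorial : ℝ) ≠ 0 := by exact_mod_cast Nat.factorial_ne_zero _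
    have h3 : (c : ℝ) + L + 1 ≠ 0 := by positivity
    have h4 : (e : ℝ) + 1 ≠ 0 := by positivity
    have h5 : (c : ℝ) + L + e + 1 + 1 ≠ 0 := by positivity
    push_cast
    field_simp
    ring

lemma altT_two (d r : ℕ) : ∀ c : ℕ, altT (d + 1 + r) c d =
    -(-1 : ℝ) ^ d * ((c + d).factorial : ℝ) / ((c + d + 1 + r).factorial : ℝ) *
      (d.factorial : ℝ) * (r.factorial : ℝ) := by
  induction r with
  | zero =>
    intro c
    have h := altT_one d c 0
    have h' := altT_one d (c + 1) 0
    simp only [add_zero] at h h' ⊢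
    rw [altT_succ, h, h', show c + 1 + d = c + d + 1 by ring, psi_succ' (c + d),
      Nat.factorial_succ (c + d)]
    have h1 : ((c + d).factorial : ℝ) ≠ 0 := by exact_mod_cast Nat.factorial_ne_zero _
    have h3 : (c : ℝ) + d + 1 ≠ 0 := by positivity
    push_cast
    simp only [Nat.factorial_zero, Nat.cast_one]
    field_simp
    ring
  | succ r ih =>
    intro c
    rw [show d + 1 + (r + 1) = d + 1 + r + 1 by ring, altT_succ, ih, ih,
      show c + 1 + d + 1 + r = c + d + 1 + r + 1 by ring,
      show c + d + 1 + (r + 1) = c + d + 1 + r + 1 by ring,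
      show c + 1 + d = c + d + 1 by ring, Nat.factorial_succ (c + d + 1 + r),
      Nat.factorial_succ (c + d), Nat.factorial_succ r]
    have h1 : ((c + d + 1 + r).factorial : ℝ) ≠ 0 := by exact_mod_cast Nat.factorial_ne_zero _
    have h3 : (c : ℝ) + d + 1 + r + 1 ≠ 0 := by positivity
    push_cast
    field_simp
    ring

/-- coefficients of the non-logarithmic part -/
noncomputable def bet (k : ℕ) : ℕ → ℝ
  | 0 => 0
  | m + 1 => (k.descFactorial m : ℝ) + ((k : ℝ) - m) * bet k m

lemma descF_succ (k m : ℕ) :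
    ((k.descFactorial (m + 1) : ℕ) : ℝ) = ((k : ℝ) - m) * (k.descFactorial m : ℝ) := by
  rw [Nat.descFactorial_succ]
  rcases le_or_gt m k with h | h
  · rw [Nat.cast_mul, Nat.cast_sub h]
  · rw [Nat.descFactorial_of_lt h]; simp

lemma descF_eq (m e : ℕ) :
    (((m + e).descFactorial m : ℕ) : ℝ) = ((m + e).factorial : ℝ) / (e.factorial : ℝ) := by
  have h2 : (e.factorial : ℝ) ≠ 0 := by exact_mod_cast Nat.factorial_ne_zero _
  have := Nat.factorial_mul_descFactorial (n := m + e) (k := m) (by omega)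
  rw [show m + e - m = e by omega] at this
  rw [← this]; push_cast; field_simp

lemma bet_one (m : ℕ) : ∀ e, bet (m + e) m =
    ((m + e).factorial : ℝ) / (e.factorial : ℝ) * (harm (m + e) - harm e) := by
  induction m with
  | zero => intro e; simp [bet]
  | succ m ih =>
    intro e
    have h2 : (e.factorial : ℝ) ≠ 0 := by exact_mod_cast Nat.factorial_ne_zero _
    have h4 : (e : ℝ) + 1 ≠ 0 := by positivity
    rw [bet, show m + 1 + e = m + (e + 1) by ring, ih, descF_eq, harm_succ' e,
      Nat.factorial_succ e]
    push_cast
    field_simp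
    ring

lemma bet_two (k r : ℕ) : bet k (k + 1 + r) =
    (-1 : ℝ) ^ r * (k.factorial : ℝ) * (r.factorial : ℝ) := by
  induction r with
  | zero => simp [bet, Nat.descFactorial_self]
  | succ r ih =>
    rw [show k + 1 + (r + 1) = k + 1 + r + 1 by ring, bet, ih,
      Nat.descFactorial_of_lt (by omega), Nat.factorial_succ r]
    push_cast
    ring

lemma iter_eq (f : ℝ → ℝ) (F : ℕ → ℝ → ℝ) (h0 : ∀ x, 1 < x → f x = F 0 x)
    (h : ∀ m x, 1 < x → HasDerivAt (F m) (F (m + 1) x) x) (m : ℕ) :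
    ∀ x, 1 < x → iteratedDeriv m f x = F m x := by
  induction m with
  | zero => intro x hx; simpa using h0 x hx
  | succ m ih =>
    intro x hx
    rw [iteratedDeriv_succ]
    have : iteratedDeriv m f =ᶠ[nhds x] F m := by
      filter_upwards [lt_mem_nhds hx] with y hy using ih y hy
    rw [this.deriv_eq]
    exact (h m x hx).deriv

lemma hasDeriv_zpow (k m : ℕ) (x : ℝ) (hx : 1 < x) :
    HasDerivAt (fun y : ℝ => (y - 1) ^ ((k : ℤ) - (m : ℤ)))
      (((k : ℝ) - m) * (x - 1) ^ ((k : ℤ) - ((m + 1 : ℕ) : ℤ))) x := by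
  have h1 : x - 1 ≠ 0 := by linarith
  have := (hasDerivAt_zpow ((k : ℤ) - (m : ℤ)) (x - 1) (Or.inl h1)).comp x
    ((hasDerivAt_id x).sub_const 1)
  refine HasDerivAt.congr_deriv this ?_
  push_cast
  rw [mul_one, sub_sub]

lemma iter_leg (a : ℕ → ℝ) (s : Finset ℕ) (f : ℝ → ℝ)
    (hf : ∀ x, 1 < x → f x = ∑ k ∈ s, a k * (x - 1) ^ k) (m : ℕ) (x : ℝ) (hx : 1 < x) :
    iteratedDeriv m f x =
      ∑ k ∈ s, a k * ((k.descFactorial m : ℝ) * (x - 1) ^ ((k : ℤ) - (m : ℤ))) := by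
  refine iter_eq f (fun m x => ∑ k ∈ s, a k * ((k.descFactorial m : ℝ) * (x - 1) ^ ((k : ℤ) - (m : ℤ)))) ?_ ?_ m x hx
  · intro x hx; simp [hf x hx]
  · intro m x hx
    apply HasDerivAt.fun_sum
    intro k _
    have := ((hasDeriv_zpow k m x hx).const_mul (k.descFactorial m : ℝ)).const_mul (a k)
    refine HasDerivAt.congr_deriv this ?_
    rw [descF_succ]; ring

lemma iter_leg_log (a : ℕ → ℝ) (s : Finset ℕ) (f : ℝ → ℝ)
    (hf : ∀ x, 1 < x → f x = ∑ k ∈ s, a k * (x - 1) ^ k) (m : ℕ) (x : ℝ) (hx : 1 < x) :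
    iteratedDeriv m (fun y => f y * Real.log (y - 1)) x =
      ∑ k ∈ s, a k * ((k.descFactorial m : ℝ) * (x - 1) ^ ((k : ℤ) - (m : ℤ)) * Real.log (x - 1)
        + bet k m * (x - 1) ^ ((k : ℤ) - (m : ℤ))) := by
  refine iter_eq _ (fun m x => ∑ k ∈ s, a k * ((k.descFactorial m : ℝ) * (x - 1) ^ ((k : ℤ) - (m : ℤ)) * Real.log (x - 1)
        + bet k m * (x - 1) ^ ((k : ℤ) - (m : ℤ)))) ?_ ?_ m x hx
  · intro x hx; simp [hf x hx, bet, Finset.sum_mul, mul_assoc]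
  · intro m x hx
    have h1 : x - 1 ≠ 0 := by linarith
    apply HasDerivAt.fun_sum
    intro k _
    have hz := hasDeriv_zpow k m x hx
    have hl : HasDerivAt (fun y : ℝ => Real.log (y - 1)) (1 / (x - 1)) x :=
      ((hasDerivAt_id x).sub_const 1).log h1
    have := (((hz.const_mul (k.descFactorial m : ℝ)).mul hl).add
      (hz.const_mul (bet k m))).const_mul (a k)
    refine HasDerivAt.congr_deriv this ?_
    have e : (x - 1) ^ ((k : ℤ) - (m : ℤ)) = (x - 1) ^ ((k : ℤ) - ((m + 1 : ℕ) : ℤ)) * (x - 1) := by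
      rw [← zpow_add_one₀ h1]; congr 1; push_cast; ring
    rw [descF_succ, bet, e]
    field_simp
    ring

lemma expand (N : ℕ) (g : ℕ → ℝ) (t : ℝ) :
    ∑ k ∈ Finset.range (N + 1), g k * (1 + t) ^ k =
      ∑ j ∈ Finset.range (N + 1), (∑ i ∈ Finset.range (N - j + 1),
        g (j + i) * ((j + i).choose j : ℝ)) * t ^ j := by
  have h1 : ∀ k ∈ Finset.range (N + 1), g k * (1 + t) ^ k =
      ∑ j ∈ Finset.range (N + 1), g k * (k.choose j : ℝ) * t ^ j := by
    intro k hk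
    rw [add_comm 1 t, add_pow, Finset.mul_sum]
    have hk' : k + 1 ≤ N + 1 := by have := Finset.mem_range.1 hk; omega
    rw [← Finset.sum_subset (Finset.range_mono hk')]
    · apply Finset.sum_congr rfl; intro j _; simp; ring
    · intro j _ hj
      rw [Nat.choose_eq_zero_of_lt (by simpa using hj)]; simp
  rw [Finset.sum_congr rfl h1, Finset.sum_comm]
  apply Finset.sum_congr rfl
  intro j hj
  have hj' : j ≤ N := by have := Finset.mem_range.1 hj; omega
  rw [← Finset.sum_mul]
  congr 1
  rw [show N + 1 = j + (N - j + 1) by omega, Finset.sum_range_add]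
  rw [Finset.sum_eq_zero, zero_add]
  intro i hi
  rw [Nat.choose_eq_zero_of_lt (by simpa using hi)]; simp

lemma inner_eq (N j L c d : ℕ) (hN : N = j + L) (b : ℕ) (hb : b = c + d) :
    ∑ i ∈ Finset.range (N - j + 1),
      ((-1 : ℝ) ^ (j + i) * ((((j + i) + b).factorial : ℝ) * psi ((j + i) + b + 1)) /
        (((j + i).factorial : ℝ) * (((j + i) + c).factorial : ℝ) * ((N - (j + i)).factorial : ℝ)))
        * ((j + i).choose j : ℝ) =
      (-1 : ℝ) ^ j / ((j.factorial : ℝ) * (L.factorial : ℝ)) * altT L (j + c) d := by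
  subst hN hb
  rw [altT, Finset.mul_sum, show j + L - j = L by omega]
  apply Finset.sum_congr rfl
  intro i hi
  have hi' : i ≤ L := by have := Finset.mem_range.1 hi; omega
  obtain ⟨r, rfl⟩ := Nat.exists_eq_add_of_le hi'
  rw [show j + (i + r) - (j + i) = r by omega, Nat.cast_add_choose, Nat.cast_add_choose,
    show j + i + (c + d) = i + (j + c) + d by ring, show j + i + c = i + (j + c) by ring]
  have h1 : (i.factorial : ℝ) ≠ 0 := by exact_mod_cast Nat.factorial_ne_zero _
  have h2 : (j.factorial : ℝ) ≠ 0 := by exact_mod_cast Nat.factorial_ne_zero _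
  have h3 : (r.factorial : ℝ) ≠ 0 := by exact_mod_cast Nat.factorial_ne_zero _
  have h4 : ((j + i).factorial : ℝ) ≠ 0 := by exact_mod_cast Nat.factorial_ne_zero _
  have h5 : ((i + r).factorial : ℝ) ≠ 0 := by exact_mod_cast Nat.factorial_ne_zero _
  have h6 : ((i + (j + c)).factorial : ℝ) ≠ 0 := by exact_mod_cast Nat.factorial_ne_zero _
  rw [pow_add]
  field_simp

/-- coefficient of the Legendre polynomial -/
noncomputable def legA (n k : ℕ) : ℝ :=
  ((n + k).factorial : ℝ) / (((k.factorial : ℝ)) ^ 2 * ((n - k).factorial : ℝ))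

lemma coeff_low (j r p : ℕ) :
    legA (j + 1 + r + p) j * bet j (j + 1 + r) =
      (-1 : ℝ) ^ (j + 1 + r + p) * ((j + 1 + r + p + (j + 1 + r)).factorial : ℝ) / (p.factorial : ℝ) *
      ((-1 : ℝ) ^ j / ((j.factorial : ℝ) * ((p + 1 + r).factorial : ℝ))
        * altT (p + 1 + r) (j + (j + 1 + r)) p) := by
  rw [altT_two, bet_two, legA, show j + 1 + r + p - j = p + 1 + r by omega,
    show j + (j + 1 + r) + p + 1 + r = j + 1 + r + p + (j + 1 + r) by ring,
    show j + (j + 1 + r) + p = j + 1 + r + p + j by ring]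
  have h1 : (p.factorial : ℝ) ≠ 0 := by exact_mod_cast Nat.factorial_ne_zero _
  have h2 : (j.factorial : ℝ) ≠ 0 := by exact_mod_cast Nat.factorial_ne_zero _
  have h3 : ((p + 1 + r).factorial : ℝ) ≠ 0 := by exact_mod_cast Nat.factorial_ne_zero _
  have h4 : ((j + 1 + r + p + (j + 1 + r)).factorial : ℝ) ≠ 0 := by
    exact_mod_cast Nat.factorial_ne_zero _
  have hs : (-1 : ℝ) ^ (j + 1 + r + p) * (-1) ^ j * -(-1) ^ p = (-1) ^ r := by
    have ej : ((-1 : ℝ) ^ j) * (-1) ^ j = 1 := by rw [← mul_pow]; simp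
    have ep : ((-1 : ℝ) ^ p) * (-1) ^ p = 1 := by rw [← mul_pow]; simp
    simp only [pow_add, pow_one]
    linear_combination (-1 : ℝ) ^ r * ((-1 : ℝ) ^ p * (-1) ^ p) * ej + (-1 : ℝ) ^ r * ep
  rw [← hs]
  field_simp

lemma coeff_high (m q e : ℕ) :
    legA (m + (q + e)) (m + q) * bet (m + q) m =
      (harm (m + (q + e)) - harm (q + e)) * (legA (m + (q + e)) (m + q) * ((m + q).descFactorial m : ℝ))
      - (-1 : ℝ) ^ (m + (q + e) + m) * 
        ((-1 : ℝ) ^ q / ((q.factorial : ℝ) * (e.factorial : ℝ)) * altT e (q + m) (m + (q + e)))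
      + (-1 : ℝ) ^ (m + (q + e)) * ((m + (q + e) + m).factorial : ℝ) / ((q + e).factorial : ℝ) *
      ((-1 : ℝ) ^ (m + q) / (((m + q).factorial : ℝ) * (e.factorial : ℝ))
        * altT e (m + q + m) (q + e)) := by
  rw [show q + e = e + q by ring, show m + (e + q) = e + (m + q) by ring,
    altT_one, altT_one, bet_one, descF_eq, legA, show e + (m + q) - (m + q) = e by omega,
    show q + m + e + (m + q) = m + q + m + e + q by ring,
    show e + (m + q) + (m + q) = m + q + m + e + q by ring,
    show e + (m + q) + m = m + q + m + e by ring, show q + m + e = e + (m + q) by ring]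
  have h1 : (q.factorial : ℝ) ≠ 0 := by exact_mod_cast Nat.factorial_ne_zero _
  have h2 : (e.factorial : ℝ) ≠ 0 := by exact_mod_cast Nat.factorial_ne_zero _
  have h3 : ((m + q).factorial : ℝ) ≠ 0 := by exact_mod_cast Nat.factorial_ne_zero _
  have h4 : ((e + q).factorial : ℝ) ≠ 0 := by exact_mod_cast Nat.factorial_ne_zero _
  have h5 : ((e + (m + q)).factorial : ℝ) ≠ 0 := by exact_mod_cast Nat.factorial_ne_zero _
  have h6 : ((m + q + m + e).factorial : ℝ) ≠ 0 := by exact_mod_cast Nat.factorial_ne_zero _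
  have em : ((-1 : ℝ) ^ m) * (-1) ^ m = 1 := by rw [← mul_pow]; simp
  have eq : ((-1 : ℝ) ^ q) * (-1) ^ q = 1 := by rw [← mul_pow]; simp
  have ee : ((-1 : ℝ) ^ e) * (-1) ^ e = 1 := by rw [← mul_pow]; simp
  have s1 : (-1 : ℝ) ^ (m + q + m + e) * ((-1) ^ q * (-1) ^ e) = 1 := by
    simp only [pow_add]
    calc _ = ((-1 : ℝ) ^ m * (-1) ^ m) * ((-1 : ℝ) ^ q * (-1) ^ q) * ((-1 : ℝ) ^ e * (-1) ^ e) := by ring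
      _ = 1 := by rw [em, eq, ee]; ring
  have s2 : (-1 : ℝ) ^ (e + (m + q)) * ((-1) ^ (m + q) * (-1) ^ e) = 1 := by
    simp only [pow_add]
    calc _ = ((-1 : ℝ) ^ m * (-1) ^ m) * ((-1 : ℝ) ^ q * (-1) ^ q) * ((-1 : ℝ) ^ e * (-1) ^ e) := by ring
      _ = 1 := by rw [em, eq, ee]; ring
  generalize hA : psi (m + q + m + e + q + 1) = A
  generalize hF : ((m + q + m + e + q).factorial : ℝ) = F
  have t1 : (-1 : ℝ) ^ (m + q + m + e) * ((-1) ^ q / ((q.factorial : ℝ) * (e.factorial : ℝ)) *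
      ((-1 : ℝ) ^ e * F / ((e + (m + q)).factorial : ℝ) * ((e + (m + q)).factorial : ℝ) /
        ((m + q).factorial : ℝ) * (A + harm (e + (m + q)) - harm (m + q)))) =
      F / ((q.factorial : ℝ) * (e.factorial : ℝ) * ((m + q).factorial : ℝ)) *
        (A + harm (e + (m + q)) - harm (m + q)) := by
    refine Eq.trans (b := ((-1 : ℝ) ^ (m + q + m + e) * ((-1) ^ q * (-1) ^ e)) * _) ?_
      ((congrArg (· * _) s1).trans (one_mul _))
    field_simp
  have t2 : (-1 : ℝ) ^ (e + (m + q)) * ((m + q + m + e).factorial : ℝ) / ((e + q).factorial : ℝ) *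
      ((-1) ^ (m + q) / (((m + q).factorial : ℝ) * (e.factorial : ℝ)) *
      ((-1 : ℝ) ^ e * F / ((m + q + m + e).factorial : ℝ) * ((e + q).factorial : ℝ) /
        (q.factorial : ℝ) * (A + harm (e + q) - harm q))) =
      F / ((q.factorial : ℝ) * (e.factorial : ℝ) * ((m + q).factorial : ℝ)) *
        (A + harm (e + q) - harm q) := by
    refine Eq.trans (b := ((-1 : ℝ) ^ (e + (m + q)) * ((-1) ^ (m + q) * (-1) ^ e)) * _) ?_
      ((congrArg (· * _) s2).trans (one_mul _))
    field_simp
  rw [t1, t2]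
  field_simp
  ring

lemma poly_id (m p : ℕ) (t : ℝ) :
    ∑ k ∈ Finset.range (m + p + 1), legA (m + p) k * bet k m * t ^ k =
      (harm (m + p) - harm p) *
        ∑ k ∈ Finset.range (m + p + 1), legA (m + p) k * (k.descFactorial m : ℝ) * t ^ k
      - (-1 : ℝ) ^ (m + p + m) * (t ^ m *
          ∑ k ∈ Finset.range (p + 1),
            ((-1 : ℝ) ^ k * (((k + (m + (m + p))).factorial : ℝ) * psi (k + (m + (m + p)) + 1)) /
                ((k.factorial : ℝ) * ((k + m).factorial : ℝ) * ((p - k).factorial : ℝ))) *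
              (1 + t) ^ k)
      + (-1 : ℝ) ^ (m + p) * ((m + p + m).factorial : ℝ) / (p.factorial : ℝ) *
          ∑ k ∈ Finset.range (m + p + 1),
            ((-1 : ℝ) ^ k * (((k + (m + p)).factorial : ℝ) * psi (k + (m + p) + 1)) /
                ((k.factorial : ℝ) * ((k + m).factorial : ℝ) * ((m + p - k).factorial : ℝ))) *
              (1 + t) ^ k := by
  rw [expand, expand]
  have hA : ∀ j ∈ Finset.range (m + p + 1), _ := fun j hj =>
    inner_eq (m + p) j (m + p - j) m p (by have := Finset.mem_range.1 hj; omega) (m + p) rfl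
  have hB : ∀ j ∈ Finset.range (p + 1), _ := fun j hj =>
    inner_eq p j (p - j) m (m + p) (by have := Finset.mem_range.1 hj; omega) (m + (m + p)) rfl
  rw [Finset.sum_congr rfl (fun j hj => congrArg (· * t ^ j) (hA j hj)),
    Finset.sum_congr rfl (fun j hj => congrArg (· * t ^ j) (hB j hj))]
  rw [add_assoc m p 1, Finset.sum_range_add _ m, Finset.sum_range_add _ m, Finset.sum_range_add _ m]
  have low0 : ∑ k ∈ Finset.range m, legA (m + p) k * (k.descFactorial m : ℝ) * t ^ k = 0 := by
    apply Finset.sum_eq_zero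
    intro k hk
    rw [Nat.descFactorial_of_lt (by simpa using hk)]; simp
  rw [low0, zero_add, mul_add]
  have hlow : ∑ k ∈ Finset.range m, legA (m + p) k * bet k m * t ^ k =
      (-1 : ℝ) ^ (m + p) * ((m + p + m).factorial : ℝ) / (p.factorial : ℝ) *
      ∑ j ∈ Finset.range m, (-1 : ℝ) ^ j / ((j.factorial : ℝ) * ((m + p - j).factorial : ℝ)) *
        altT (m + p - j) (j + m) p * t ^ j := by
    rw [Finset.mul_sum]
    apply Finset.sum_congr rfl
    intro j hj
    obtain ⟨r, rfl⟩ := Nat.exists_eq_add_of_le (show j + 1 ≤ m by simpa using hj)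
    rw [coeff_low, show j + 1 + r + p - j = p + 1 + r by omega]
    ring
  have hhigh : ∑ q ∈ Finset.range (p + 1), legA (m + p) (m + q) * bet (m + q) m * t ^ (m + q) =
      (harm (m + p) - harm p) * ∑ q ∈ Finset.range (p + 1),
        legA (m + p) (m + q) * ((m + q).descFactorial m : ℝ) * t ^ (m + q)
      - (-1 : ℝ) ^ (m + p + m) * (t ^ m * ∑ j ∈ Finset.range (p + 1),
        (-1 : ℝ) ^ j / ((j.factorial : ℝ) * ((p - j).factorial : ℝ)) *
          altT (p - j) (j + m) (m + p) * t ^ j)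
      + (-1 : ℝ) ^ (m + p) * ((m + p + m).factorial : ℝ) / (p.factorial : ℝ) *
      ∑ q ∈ Finset.range (p + 1),
        (-1 : ℝ) ^ (m + q) / (((m + q).factorial : ℝ) * ((m + p - (m + q)).factorial : ℝ)) *
        altT (m + p - (m + q)) (m + q + m) p * t ^ (m + q) := by
    simp only [Finset.mul_sum]
    rw [← Finset.sum_sub_distrib, ← Finset.sum_add_distrib]
    apply Finset.sum_congr rfl
    intro q hq
    obtain ⟨e, rfl⟩ := Nat.exists_eq_add_of_le
      (show q ≤ p by have := Finset.mem_range.1 hq; omega)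
    rw [coeff_high, show m + (q + e) - (m + q) = e by omega, show q + e - q = e by omega,
      pow_add t m q]
    ring
  rw [hlow, hhigh]
  ring

theorem stmt_1 (m n : ℕ) (hmn : m ≤ n) (x : ℝ) (hx : 1 < x) :
    iteratedDeriv m (fun y => legendreP n y * Real.log (y - 1)) x =
      iteratedDeriv m (legendreP n) x * Real.log (x - 1)
      + (psi (n + 1) - psi (n - m + 1)) * iteratedDeriv m (legendreP n) x
      - (-1 : ℝ) ^ (n + m) * (2 : ℝ) ^ (-(m : ℤ)) *
          ∑ k ∈ Finset.range (n - m + 1),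
            (-1 : ℝ) ^ k * (((k + n + m).factorial : ℝ) * psi (k + n + m + 1)) /
                ((k.factorial : ℝ) * ((k + m).factorial : ℝ) * ((n - m - k).factorial : ℝ)) *
              ((x + 1) / 2) ^ k
      + (-1 : ℝ) ^ n * ((n + m).factorial : ℝ) / ((n - m).factorial : ℝ) *
            (x - 1) ^ (-(m : ℤ)) *
          ∑ k ∈ Finset.range (n + 1),
            (-1 : ℝ) ^ k * (((k + n).factorial : ℝ) * psi (k + n + 1)) /
                ((k.factorial : ℝ) * ((k + m).factorial : ℝ) * ((n - k).factorial : ℝ)) *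
              ((x + 1) / 2) ^ k := by
  obtain ⟨p, rfl⟩ := Nat.exists_eq_add_of_le hmn
  have hf : ∀ y, 1 < y → legendreP (m + p) y =
      ∑ k ∈ Finset.range (m + p + 1), (legA (m + p) k / 2 ^ k) * (y - 1) ^ k := by
    intro y _
    unfold legendreP legA
    apply Finset.sum_congr rfl
    intro k _
    rw [div_pow]; ring
  have hu : x - 1 ≠ 0 := by linarith
  rw [iter_leg_log _ _ _ hf m x hx, iter_leg _ _ _ hf m x hx]
  have hz : ∀ k : ℕ, (x - 1) ^ ((k : ℤ) - (m : ℤ)) =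
      2 ^ k * ((x - 1) / 2) ^ k * (x - 1) ^ (-(m : ℤ)) := by
    intro k
    rw [sub_eq_add_neg (k : ℤ), zpow_add₀ hu, zpow_natCast, div_pow]
    field_simp
  have h2 : (2 : ℝ) ^ (-(m : ℤ)) = ((x - 1) / 2) ^ m * (x - 1) ^ (-(m : ℤ)) := by
    rw [zpow_neg, zpow_neg, zpow_natCast, zpow_natCast, div_pow]
    field_simp
  have h3 : (x + 1) / 2 = 1 + (x - 1) / 2 := by ring
  rw [h2, h3]
  have key := poly_id m p ((x - 1) / 2)
  generalize (x - 1) / 2 = t at *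
  have e1 : ∀ g : ℕ → ℝ, ∑ k ∈ Finset.range (m + p + 1),
      legA (m + p) k / 2 ^ k * (g k * (x - 1) ^ ((k : ℤ) - (m : ℤ))) =
      (x - 1) ^ (-(m : ℤ)) * ∑ k ∈ Finset.range (m + p + 1), legA (m + p) k * g k * t ^ k := by
    intro g
    rw [Finset.mul_sum]
    apply Finset.sum_congr rfl
    intro k _
    rw [hz]
    field_simp
  have e2 : psi (m + p + 1) - psi (m + p - m + 1) = harm (m + p) - harm p := by
    simp [psi]
  simp only [mul_add, Finset.sum_add_distrib, ← mul_assoc] at e1 ⊢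
  simp only [← Finset.sum_mul]
  rw [e1, e1, e2]
  have hs : m + p - m = p := by omega
  rw [hs]
  have hk : ∀ k, k + (m + (m + p)) = k + (m + p) + m := by intro k; ring
  simp only [hk] at key
  simp only [← add_assoc, ← mul_assoc] at key ⊢
  rw [key]
  ring
end

section
/- Let m, n be natural numbers with 0 ≤ m ≤ n, and let x > 1 be real. Then d^m/dx^m [P_n(x)·log(x+1)] = P_n^{(m)}(x)·log(x+1) + (ψ(n+1) − ψ(n−m+1))·P_n^{(m)}(x) + (−1)^n·((n+m)!/(n−m)!)·(x+1)^{−m} Σ_{k=0}^{m−1} (−1)^k·((2k+1)/((n−k)(k+n+1))) · Σ_{j=0}^{k} ((k+j)!/((k−j)!·(m+j)!·j!))·((x−1)/2)^j − (−1)^{n+m} Σ_{k=0}^{n−m−1} (−1)^k·((2k+2m+1)/((n−m−k)(k+n+m+1)))·(1 − (k!·(n+m)!)/((k+2m)!·(n−m)!))·P_{k+m}^{(m)}(x). -/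
open Finset Real

/-- `aC m k = ∏_{i<m} (k-i)(k+i+1)`, equal to `(k+m)!/(k-m)!` for `m ≤ k` and `0` otherwise. -/
noncomputable def aC : ℕ → ℕ → ℝ
  | 0, _ => 1
  | m + 1, k => aC m k * (((k : ℝ) - m) * ((k : ℝ) + m + 1))

lemma aC_eq (m k : ℕ) (h : m ≤ k) :
    aC m k = ((k + m).factorial : ℝ) / ((k - m).factorial : ℝ) := by
  induction m with
  | zero => simp [aC, Nat.factorial_ne_zero]
  | succ m ih =>
    obtain ⟨d, rfl⟩ := Nat.exists_eq_add_of_le h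
    have h1 : m + 1 + d - m = d + 1 := by omega
    have h2 : m + 1 + d - (m + 1) = d := by omega
    rw [aC, ih (by omega), h1, h2, ← add_assoc (m + 1 + d) m 1, Nat.factorial_succ,
      Nat.factorial_succ]
    have := Nat.factorial_ne_zero d
    push_cast
    field_simp
    ring

lemma aC_zero (m k : ℕ) (h : k < m) : aC m k = 0 := by
  induction m with
  | zero => omega
  | succ m ih =>
    rcases Nat.lt_succ_iff_lt_or_eq.mp h with h | h
    · simp [aC, ih h]
    · simp [aC, h]

lemma aC_pos (m k : ℕ) (h : m ≤ k) : 0 < aC m k := by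
  rw [aC_eq m k h]; positivity

lemma aC_step (j n : ℕ) :
    aC j (n + 1) * ((n : ℝ) + 1 - j) = aC j n * ((n : ℝ) + 1 + j) := by
  induction j with
  | zero => simp [aC]
  | succ j ih =>
    simp only [aC]; push_cast
    linear_combination (((n : ℝ) - j) * ((n : ℝ) + j + 2)) * ih

/-- The coefficient of `t^j`. -/
noncomputable def cC (k m j : ℕ) : ℝ := aC j k / (((m + j).factorial : ℝ) * (j.factorial : ℝ))

noncomputable def qP (k m : ℕ) (t : ℝ) : ℝ := ∑ j ∈ Finset.range (k + 1), cC k m j * t ^ j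

noncomputable def QF (k m : ℕ) (x : ℝ) : ℝ := ((x + 1) ^ m)⁻¹ * qP k m ((x - 1) / 2)

lemma qP_step (n m : ℕ) (t : ℝ) :
    qP (n + 1) m t + qP n m t =
      ((n : ℝ) + m + 2) * qP (n + 1) (m + 1) t + ((m : ℝ) - n) * qP n (m + 1) t := by
  have ext : ∀ m, qP n m t = ∑ j ∈ Finset.range (n + 1 + 1), cC n m j * t ^ j := by
    intro m
    rw [Finset.sum_range_succ]
    simp [qP, cC, aC_zero (n + 1) n (by omega)]
  rw [ext, ext, qP, qP, ← Finset.sum_add_distrib, Finset.mul_sum, Finset.mul_sum,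
    ← Finset.sum_add_distrib]
  refine Finset.sum_congr rfl fun j _ => ?_
  have h := aC_step j n
  unfold cC
  rw [show m + 1 + j = (m + j) + 1 by ring, Nat.factorial_succ]
  have h1 := Nat.factorial_ne_zero (m + j)
  have h2 := Nat.factorial_ne_zero j
  have h3 : ((m : ℝ) + j + 1) ≠ 0 := by positivity
  push_cast
  field_simp
  linear_combination (-(t ^ j)) * h

lemma qP_deriv (k m : ℕ) (t : ℝ) :
    HasDerivAt (qP k m) (∑ j ∈ Finset.range (k + 1), ((j : ℝ) + 1) * cC k m (j + 1) * t ^ j) t := by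
  have h : HasDerivAt (qP k m)
      (∑ j ∈ Finset.range (k + 1), cC k m j * ((j : ℝ) * t ^ (j - 1))) t := by
    unfold qP
    exact HasDerivAt.fun_sum fun j _ => (hasDerivAt_pow j t).const_mul _
  convert h using 1
  rw [Finset.sum_range_succ, Finset.sum_range_succ']
  simp only [cC, aC_zero (k + 1) k (by omega)]
  simp
  refine Finset.sum_congr rfl fun j _ => ?_
  ring

lemma QF_deriv (k m : ℕ) (x : ℝ) (hx : 1 < x) :
    HasDerivAt (QF k m) ((((k : ℝ) - m) * ((k : ℝ) + m + 1)) * QF k (m + 1) x) x := by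
  have hx1 : x + 1 ≠ 0 := by linarith
  have h1 : HasDerivAt (fun y : ℝ => (y - 1) / 2) (1 / 2) x :=
    ((hasDerivAt_id x).sub_const 1).div_const 2
  have h2 := (qP_deriv k m ((x - 1) / 2)).comp x h1
  have h3 : HasDerivAt (fun y : ℝ => ((y + 1) ^ m)⁻¹) (-(m : ℝ) * ((x + 1) ^ (m + 1))⁻¹) x := by
    have h4 : HasDerivAt (fun y : ℝ => (y + 1) ^ m) ((m : ℝ) * (x + 1) ^ (m - 1) * 1) x :=
      ((hasDerivAt_id x).add_const 1).pow m
    refine (h4.inv (pow_ne_zero m hx1)).congr_deriv ?_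
    cases m with
    | zero => simp
    | succ m =>
      simp only [Nat.add_sub_cancel]
      field_simp
      ring
  have h5 := h3.mul h2
  have key : (1 + (x - 1) / 2) *
        (∑ j ∈ Finset.range (k + 1), ((j : ℝ) + 1) * cC k m (j + 1) * ((x - 1) / 2) ^ j)
      - m * qP k m ((x - 1) / 2)
      = (((k : ℝ) - m) * ((k : ℝ) + m + 1)) * qP k (m + 1) ((x - 1) / 2) := by
    generalize (x - 1) / 2 = t
    have e : t * (∑ j ∈ Finset.range (k + 1), ((j : ℝ) + 1) * cC k m (j + 1) * t ^ j)
        = ∑ j ∈ Finset.range (k + 1), (j : ℝ) * cC k m j * t ^ j := by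
      rw [Finset.sum_range_succ, Finset.sum_range_succ' _ k]
      simp only [cC, aC_zero (k + 1) k (by omega)]
      simp [Finset.mul_sum]
      refine Finset.sum_congr rfl fun j _ => ?_
      ring
    rw [add_mul, e, one_mul, qP, qP, Finset.mul_sum, Finset.mul_sum, ← Finset.sum_add_distrib,
      ← Finset.sum_sub_distrib]
    refine Finset.sum_congr rfl fun j _ => ?_
    unfold cC
    rw [show m + 1 + j = (m + j) + 1 by ring, show m + (j + 1) = (m + j) + 1 by ring,
      Nat.factorial_succ, Nat.factorial_succ, aC]
    have h1 := Nat.factorial_ne_zero (m + j)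
    have h2 := Nat.factorial_ne_zero j
    have h3 : ((m : ℝ) + j + 1) ≠ 0 := by positivity
    push_cast
    field_simp
    ring
  refine h5.congr_deriv ?_
  unfold QF
  rw [mul_left_comm (((k : ℝ) - m) * ((k : ℝ) + m + 1)), ← key]
  simp only [Function.comp]
  have hp : ((x + 1) ^ m)⁻¹ = (x + 1) * ((x + 1) ^ (m + 1))⁻¹ := by
    field_simp
    ring
  rw [hp]
  ring

lemma QF_sum (n m : ℕ) (x : ℝ) (hx : 1 < x) :
    QF n m x / (x + 1) = ((n : ℝ) + m + 1) * QF n (m + 1) x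
      + (-1) ^ n * ∑ k ∈ Finset.range n, (-1 : ℝ) ^ k * (2 * k + 1) * QF k (m + 1) x := by
  have hx1 : x + 1 ≠ 0 := by linarith
  induction n with
  | zero =>
    simp [QF, qP, cC, aC, Nat.factorial_succ]
    have := Nat.factorial_ne_zero m
    have h3 : ((m : ℝ) + 1) ≠ 0 := by positivity
    field_simp
    try ring
  | succ n ih =>
    have hs : (QF (n + 1) m x + QF n m x) / (x + 1) =
        ((n : ℝ) + m + 2) * QF (n + 1) (m + 1) x + ((m : ℝ) - n) * QF n (m + 1) x := by
      have := qP_step n m ((x - 1) / 2)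
      unfold QF
      rw [← mul_add, this]
      field_simp
      ring
    rw [add_div] at hs
    rw [Finset.sum_range_succ]
    have hsq : ((-1 : ℝ) ^ n) * (-1) ^ n = 1 := by
      rw [← mul_pow]; simp
    rw [pow_succ]
    push_cast
    linear_combination hs - ih + (2 * (n : ℝ) + 1) * QF n (m + 1) x * hsq

lemma legendreP_eq (n : ℕ) (x : ℝ) : legendreP n x = QF n 0 x := by
  simp only [legendreP, QF, qP, cC, pow_zero, inv_one, one_mul, zero_add]
  refine Finset.sum_congr rfl fun j hj => ?_
  rw [aC_eq j n (by simp at hj; omega), div_div]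
  congr 2
  ring

lemma iter_step {f g : ℝ → ℝ} {m : ℕ} {x g' : ℝ} (hx : 1 < x)
    (h : ∀ y, 1 < y → iteratedDeriv m f y = g y) (hg : HasDerivAt g g' x) :
    iteratedDeriv (m + 1) f x = g' := by
  rw [iteratedDeriv_succ]
  have : iteratedDeriv m f =ᶠ[nhds x] g := by
    filter_upwards [Ioi_mem_nhds hx] with y hy using h y hy
  rw [this.deriv_eq, hg.deriv]

lemma iter_legendre (n m : ℕ) : ∀ x : ℝ, 1 < x →
    iteratedDeriv m (legendreP n) x = aC m n * QF n m x := by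
  induction m with
  | zero => intro x _; simp [aC, legendreP_eq]
  | succ m ih =>
    intro x hx
    rw [iter_step hx ih ((QF_deriv n m x hx).const_mul _), aC]
    ring

lemma psi_step (n m : ℕ) (h : m < n) :
    psi (n + 1) - psi (n - (m + 1) + 1) = psi (n + 1) - psi (n - m + 1) + 1 / ((n : ℝ) - m) := by
  obtain ⟨d, rfl⟩ := Nat.exists_eq_add_of_le h
  have h1 : m.succ + d - m = d + 1 := by omega
  have h2 : m.succ + d - (m + 1) = d := by omega
  rw [h1, h2]
  simp only [psi, Nat.add_sub_cancel, harm, Finset.sum_range_succ]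
  push_cast
  rw [show (m : ℝ) + 1 + d - m = d + 1 by ring]
  ring

lemma main_aux (n m : ℕ) (hmn : m ≤ n) : ∀ x : ℝ, 1 < x →
    iteratedDeriv m (fun y => legendreP n y * Real.log (y + 1)) x =
      aC m n * QF n m x * Real.log (x + 1)
      + (psi (n + 1) - psi (n - m + 1)) * (aC m n * QF n m x)
      - (-1) ^ n * ∑ k ∈ Finset.range n,
          (-1 : ℝ) ^ k * ((2 * k + 1) / (((n : ℝ) - k) * ((k : ℝ) + n + 1))) *
            (aC m k - aC m n) * QF k m x := by
  induction m with
  | zero => intro x _; simp [aC, legendreP_eq]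
  | succ m ih =>
    intro x hx
    have hx1 : x + 1 ≠ 0 := by linarith
    have hQ := (QF_deriv n m x hx).const_mul (aC m n)
    have hl : HasDerivAt (fun y : ℝ => Real.log (y + 1)) (1 / (x + 1)) x :=
      ((hasDerivAt_id x).add_const 1).log hx1
    have hS := (HasDerivAt.fun_sum (u := Finset.range n) fun k _ =>
      (QF_deriv k m x hx).const_mul ((-1 : ℝ) ^ k *
        ((2 * k + 1) / (((n : ℝ) - k) * ((k : ℝ) + n + 1))) * (aC m k - aC m n))).const_mul
          ((-1 : ℝ) ^ n)
    have hT := ((hQ.mul hl).add (hQ.const_mul (psi (n + 1) - psi (n - m + 1)))).sub hS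
    rw [iter_step hx (ih (by omega)) hT, psi_step n m (by omega)]
    have hnm : (n : ℝ) - m ≠ 0 := by
      have : (m : ℝ) < n := by exact_mod_cast hmn
      linarith
    have hsum : ∑ k ∈ Finset.range n,
          (-1 : ℝ) ^ k * ((2 * k + 1) / (((n : ℝ) - k) * ((k : ℝ) + n + 1))) *
            (aC (m + 1) k - aC (m + 1) n) * QF k (m + 1) x
        = (∑ k ∈ Finset.range n, (-1 : ℝ) ^ k *
        ((2 * k + 1) / (((n : ℝ) - k) * ((k : ℝ) + n + 1))) * (aC m k - aC m n) *
          ((((k : ℝ) - m) * ((k : ℝ) + m + 1)) * QF k (m + 1) x))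
          - aC m n * ∑ k ∈ Finset.range n, (-1 : ℝ) ^ k * (2 * k + 1) * QF k (m + 1) x := by
      rw [Finset.mul_sum, ← Finset.sum_sub_distrib]
      refine Finset.sum_congr rfl fun k hk => ?_
      have hk' : (k : ℝ) < n := by exact_mod_cast Finset.mem_range.mp hk
      have h1 : (n : ℝ) - k ≠ 0 := by linarith
      have h2 : (k : ℝ) + n + 1 ≠ 0 := by positivity
      simp only [aC]
      field_simp
      ring
    rw [hsum]
    have hq := QF_sum n m x hx
    have hd : 1 / ((n : ℝ) - m) * (aC (m + 1) n * QF n (m + 1) x)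
        = aC m n * ((n : ℝ) + m + 1) * QF n (m + 1) x := by
      simp only [aC]; field_simp
    rw [add_mul _ (1 / ((n : ℝ) - m)), hd]
    simp only [aC]
    linear_combination (aC m n) * hq

theorem stmt_8 (m n : ℕ) (hmn : m ≤ n) (x : ℝ) (hx : 1 < x) :
    iteratedDeriv m (fun y => legendreP n y * Real.log (y + 1)) x =
      iteratedDeriv m (legendreP n) x * Real.log (x + 1)
      + (psi (n + 1) - psi (n - m + 1)) * iteratedDeriv m (legendreP n) x
      + (-1 : ℝ) ^ n * ((n + m).factorial : ℝ) / ((n - m).factorial : ℝ) *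
            (x + 1) ^ (-(m : ℤ)) *
          ∑ k ∈ Finset.range m,
            (-1 : ℝ) ^ k * ((2 * k + 1 : ℝ) / (((n : ℝ) - k) * ((k : ℝ) + n + 1))) *
              ∑ j ∈ Finset.range (k + 1),
                ((k + j).factorial : ℝ) /
                    (((k - j).factorial : ℝ) * ((m + j).factorial : ℝ) *
                      (j.factorial : ℝ)) * ((x - 1) / 2) ^ j
      - (-1 : ℝ) ^ (n + m) *
          ∑ k ∈ Finset.range (n - m),
            (-1 : ℝ) ^ k *
              ((2 * k + 2 * m + 1 : ℝ) / (((n : ℝ) - m - k) * ((k : ℝ) + n + m + 1))) *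
              (1 - ((k.factorial : ℝ) * ((n + m).factorial : ℝ)) /
                  (((k + 2 * m).factorial : ℝ) * ((n - m).factorial : ℝ))) *
              iteratedDeriv m (legendreP (k + m)) x := by
  rw [main_aux n m hmn x hx]
  simp only [iter_legendre _ _ x hx]
  have hnm : ((n + m).factorial : ℝ) / ((n - m).factorial : ℝ) = aC m n := (aC_eq m n hmn).symm
  rw [mul_div_assoc, hnm]
  have hsplit : ∀ f : ℕ → ℝ, ∑ k ∈ Finset.range n, f k =
      ∑ k ∈ Finset.range m, f k + ∑ k ∈ Finset.range (n - m), f (m + k) := by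
    intro f
    rw [← Finset.sum_range_add, Nat.add_sub_cancel' hmn]
  rw [hsplit]
  have hA : (x + 1) ^ (-(m : ℤ)) *
          ∑ k ∈ Finset.range m,
            (-1 : ℝ) ^ k * ((2 * k + 1 : ℝ) / (((n : ℝ) - k) * ((k : ℝ) + n + 1))) *
              ∑ j ∈ Finset.range (k + 1),
                ((k + j).factorial : ℝ) /
                    (((k - j).factorial : ℝ) * ((m + j).factorial : ℝ) *
                      (j.factorial : ℝ)) * ((x - 1) / 2) ^ j
      = ∑ k ∈ Finset.range m,
            (-1 : ℝ) ^ k * ((2 * k + 1 : ℝ) / (((n : ℝ) - k) * ((k : ℝ) + n + 1))) *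
              QF k m x := by
    rw [Finset.mul_sum]
    refine Finset.sum_congr rfl fun k _ => ?_
    have hq : ∑ j ∈ Finset.range (k + 1),
                ((k + j).factorial : ℝ) /
                    (((k - j).factorial : ℝ) * ((m + j).factorial : ℝ) *
                      (j.factorial : ℝ)) * ((x - 1) / 2) ^ j = qP k m ((x - 1) / 2) := by
      unfold qP cC
      refine Finset.sum_congr rfl fun j hj => ?_
      rw [aC_eq j k (by simp at hj; omega), div_div, mul_assoc]
    rw [hq, QF, zpow_neg, zpow_natCast]
    ring
  have hB : ∑ k ∈ Finset.range m,
          (-1 : ℝ) ^ k * ((2 * k + 1) / (((n : ℝ) - k) * ((k : ℝ) + n + 1))) *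
            (aC m k - aC m n) * QF k m x
      = - (aC m n * ∑ k ∈ Finset.range m,
            (-1 : ℝ) ^ k * ((2 * k + 1 : ℝ) / (((n : ℝ) - k) * ((k : ℝ) + n + 1))) *
              QF k m x) := by
    rw [Finset.mul_sum, ← Finset.sum_neg_distrib]
    refine Finset.sum_congr rfl fun k hk => ?_
    rw [aC_zero m k (Finset.mem_range.mp hk)]
    ring
  have hC : (-1 : ℝ) ^ n * ∑ k ∈ Finset.range (n - m),
          (-1 : ℝ) ^ (m + k) * ((2 * ((m + k : ℕ) : ℝ) + 1) /
            (((n : ℝ) - ((m + k : ℕ) : ℝ)) * (((m + k : ℕ) : ℝ) + n + 1))) *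
            (aC m (m + k) - aC m n) * QF (m + k) m x
      = (-1 : ℝ) ^ (n + m) *
          ∑ k ∈ Finset.range (n - m),
            (-1 : ℝ) ^ k *
              ((2 * k + 2 * m + 1 : ℝ) / (((n : ℝ) - m - k) * ((k : ℝ) + n + m + 1))) *
              (1 - ((k.factorial : ℝ) * ((n + m).factorial : ℝ)) /
                  (((k + 2 * m).factorial : ℝ) * ((n - m).factorial : ℝ))) *
              (aC m (k + m) * QF (k + m) m x) := by
    rw [Finset.mul_sum, Finset.mul_sum]
    refine Finset.sum_congr rfl fun k _ => ?_
    have e1 : ((k.factorial : ℝ) * ((n + m).factorial : ℝ)) /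
                  (((k + 2 * m).factorial : ℝ) * ((n - m).factorial : ℝ))
        = aC m n / aC m (k + m) := by
      rw [← hnm, aC_eq m (k + m) (by omega), Nat.add_sub_cancel,
        show k + m + m = k + 2 * m by ring]
      have := Nat.factorial_ne_zero (k + 2 * m)
      have := Nat.factorial_ne_zero k
      have := Nat.factorial_ne_zero (n - m)
      field_simp
    have e2 : (1 - aC m n / aC m (k + m)) * (aC m (k + m) * QF (k + m) m x)
        = (aC m (k + m) - aC m n) * QF (k + m) m x := by
      have := (aC_pos m (k + m) (by omega)).ne'
      field_simp
    rw [e1, mul_assoc (_ * _) (1 - _), e2, add_comm m k]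
    push_cast
    rw [show (n : ℝ) - (k + m) = n - m - k by ring,
      show (k : ℝ) + m + n + 1 = k + n + m + 1 by ring,
      show (2 : ℝ) * (k + m) + 1 = 2 * k + 2 * m + 1 by ring]
    ring
  rw [mul_assoc ((-1 : ℝ) ^ n * aC m n), hA, mul_add ((-1 : ℝ) ^ n), hC, hB]
  ring
end
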